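/- Let Λ : ℝ → ℝ^d be C¹ and exponentially bi-asymptotically constant with decay coefficient ρ > 0, with Λ(τ) → λ⁺ as τ → +∞ and Λ(τ) → λ⁻ as τ → −∞. Then for every α with 0 < α < ρ (strict inequality), the derivative of Λ_α within [−1,1] vanishes at both endpoints: the one-sided derivatives of Λ_α at s = 1 and at s = −1 are equal to 0 ∈ ℝ^d. -/

import Mathlib

open Filter Topology

/-- The time compactification map `g_α(τ) = tanh(ατ/2)`. -/
noncomputable def gcomp (α τ : ℝ) : ℝ := Real.tanh (α * τ / 2)

/-- Its inverse `h_α(s) = (1/α)·ln((1+s)/(1-s))`. -/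
noncomputable def hcomp (α s : ℝ) : ℝ := (1 / α) * Real.log ((1 + s) / (1 - s))

/-- `Λ : ℝ → ℝ^d` is exponentially bi-asymptotically constant with decay coefficient `ρ`:
both limits `lim_{τ→+∞} Λ'(τ)·e^{ρτ}` and `lim_{τ→-∞} Λ'(τ)·e^{-ρτ}` exist. -/
def ExpBiAsympConst {d : ℕ} (Λ : ℝ → Fin d → ℝ) (ρ : ℝ) : Prop :=
  (∃ Lp : Fin d → ℝ, Tendsto (fun τ => Real.exp (ρ * τ) • deriv Λ τ) atTop (𝓝 Lp)) ∧
  (∃ Lm : Fin d → ℝ, Tendsto (fun τ => Real.exp (-ρ * τ) • deriv Λ τ) atBot (𝓝 Lm))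

/-- The compactified input `Λ_α : [-1,1] → ℝ^d`, equal to `Λ ∘ h_α` on `(-1,1)` and to the
future/past limits `lp`, `lm` at `s = 1`, `s = -1` respectively. -/
noncomputable def compInput {d : ℕ} (Λ : ℝ → Fin d → ℝ) (lp lm : Fin d → ℝ)
    (α s : ℝ) : Fin d → ℝ :=
  if s = 1 then lp else if s = -1 then lm else Λ (hcomp α s)

/-! On `(-1, 1)` one has `h_α'(s) = 2 (α (1 + s)²)⁻¹ e^{α h_α(s)}`, so the derivative of `Λ ∘ h_α`
is `2 (α (1 + s)²)⁻¹ • e^{ατ} • Λ'(τ)` at `τ = h_α(s)`. As `s → 1` this tends to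
`(2α)⁻¹ • lim e^{ατ} • Λ'(τ)`, and by the mean value theorem that limit is the one-sided derivative
at `1`. The endpoint `-1` follows by the reflection `s ↦ -s`, since `h_α` is odd. If
`e^{ρτ} • Λ'(τ)` converges as `τ → ∞` and `α < ρ`, then `e^{ατ} • Λ'(τ)` tends to `0`. -/

section Hcomp

variable {α s : ℝ}

lemma hcomp_neg : hcomp α (-s) = -hcomp α s := by
  rw [hcomp, hcomp, ← mul_neg, ← Real.log_inv, inv_div, sub_neg_eq_add, ← sub_eq_add_neg]

lemma exp_mul_hcomp (hα : α ≠ 0) (hs : s ∈ Set.Ioo (-1) 1) :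
    Real.exp (α * hcomp α s) = (1 + s) / (1 - s) := by
  rw [hcomp, ← mul_assoc, mul_one_div_cancel hα, one_mul, Real.exp_log]
  exact div_pos (by linarith [hs.1]) (by linarith [hs.2])

lemma hasDerivAt_hcomp (hα : α ≠ 0) (hs : s ∈ Set.Ioo (-1) 1) :
    HasDerivAt (hcomp α) (2 / (α * (1 + s) ^ 2) * Real.exp (α * hcomp α s)) s := by
  have h_add : 1 + s ≠ 0 := by linarith [hs.1]
  have h_sub : 1 - s ≠ 0 := by linarith [hs.2]
  have h_quot : HasDerivAt (fun x : ℝ => (1 + x) / (1 - x))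
      ((1 * (1 - s) - (1 + s) * (-1)) / (1 - s) ^ 2) s :=
    ((hasDerivAt_id s).const_add 1).div ((hasDerivAt_id s).const_sub 1) h_sub
  refine ((h_quot.log (div_ne_zero h_add h_sub)).const_mul (1 / α)).congr_deriv ?_
  rw [exp_mul_hcomp hα hs]
  field_simp
  ring

lemma tendsto_hcomp_nhdsLT_one (hα : 0 < α) : Tendsto (hcomp α) (𝓝[<] 1) atTop := by
  have h_add : Tendsto (fun s : ℝ => 1 + s) (𝓝[<] 1) (𝓝 (1 + 1)) :=
    tendsto_nhdsWithin_of_tendsto_nhds (Continuous.tendsto (by fun_prop) 1)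
  have h_sub : Tendsto (fun s : ℝ => 1 - s) (𝓝[<] 1) (𝓝[>] 0) := by
    refine tendsto_nhdsWithin_iff.2 ⟨tendsto_nhdsWithin_of_tendsto_nhds ?_, ?_⟩
    · exact Continuous.tendsto' (by fun_prop) 1 0 (sub_self 1)
    · filter_upwards [self_mem_nhdsWithin] with s (hs : s < 1) using sub_pos.2 hs
  have h_quot : Tendsto (fun s : ℝ => (1 + s) / (1 - s)) (𝓝[<] 1) atTop :=
    h_add.pos_mul_atTop (by norm_num) (tendsto_inv_nhdsGT_zero.comp h_sub)
  exact (Real.tendsto_log_atTop.comp h_quot).const_mul_atTop (one_div_pos.2 hα)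

end Hcomp

section OneSidedDerivative

variable {E : Type*} [NormedAddCommGroup E] [NormedSpace ℝ E]

lemma hasDerivWithinAt_Iic_of_tendsto {f f' : ℝ → E} {a : ℝ} {e : E}
    (hf : ∀ᶠ x in 𝓝[<] a, HasDerivAt f (f' x) x) (hfa : Tendsto f (𝓝[<] a) (𝓝 (f a)))
    (hf' : Tendsto f' (𝓝[<] a) (𝓝 e)) : HasDerivWithinAt f e (Set.Iic a) a := by
  refine hasDerivWithinAt_Iic_of_tendsto_deriv
    (s := {x | HasDerivAt f (f' x) x} ∩ Set.Iio a) ?_ ?_ ?_ ?_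
  · exact fun x hx => hx.1.differentiableAt.differentiableWithinAt
  · exact hfa.mono_left (nhdsWithin_mono a Set.inter_subset_right)
  · exact inter_mem hf self_mem_nhdsWithin
  · exact hf'.congr' (hf.mono fun x hx => hx.deriv.symm)

variable {Λ Λ' f : ℝ → E} {α : ℝ} {L : E}

lemma hasDerivAt_comp_hcomp {s : ℝ} {v : E} (hα : α ≠ 0) (hs : s ∈ Set.Ioo (-1) 1)
    (hΛ : HasDerivAt Λ v (hcomp α s)) :
    HasDerivAt (Λ ∘ hcomp α) ((2 / (α * (1 + s) ^ 2)) • Real.exp (α * hcomp α s) • v) s := by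
  rw [smul_smul]
  exact hΛ.scomp s (hasDerivAt_hcomp hα hs)

lemma hasDerivWithinAt_one_of_eqOn_comp_hcomp (hα : 0 < α)
    (hf : Set.EqOn f (Λ ∘ hcomp α) (Set.Ioo (-1) 1))
    (hΛ : ∀ᶠ τ in atTop, HasDerivAt Λ (Λ' τ) τ) (hlim : Tendsto Λ atTop (𝓝 (f 1)))
    (hL : Tendsto (fun τ => Real.exp (α * τ) • Λ' τ) atTop (𝓝 L)) :
    HasDerivWithinAt f ((2 * α)⁻¹ • L) (Set.Iic 1) 1 := by
  have hh := tendsto_hcomp_nhdsLT_one hα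
  have h_mem : ∀ᶠ s : ℝ in 𝓝[<] 1, s ∈ Set.Ioo (-1 : ℝ) 1 := Ioo_mem_nhdsLT (by norm_num)
  refine hasDerivWithinAt_Iic_of_tendsto
    (f' := fun s => (2 / (α * (1 + s) ^ 2)) • Real.exp (α * hcomp α s) • Λ' (hcomp α s)) ?_ ?_ ?_
  · filter_upwards [h_mem, hh.eventually hΛ] with s hs hΛs
    exact (hasDerivAt_comp_hcomp hα.ne' hs hΛs).congr_of_eventuallyEq
      (hf.eventuallyEq_of_mem (isOpen_Ioo.mem_nhds hs))
  · exact (hlim.comp hh).congr' (h_mem.mono fun s hs => (hf hs).symm)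
  · have h_coeff : Tendsto (fun s : ℝ => 2 / (α * (1 + s) ^ 2)) (𝓝[<] 1) (𝓝 (2 * α)⁻¹) := by
      have h_cont : ContinuousAt (fun s : ℝ => 2 / (α * (1 + s) ^ 2)) 1 := by
        fun_prop (disch := positivity)
      have h_val : 2 / (α * (1 + 1) ^ 2) = (2 * α)⁻¹ := by field
      exact tendsto_nhdsWithin_of_tendsto_nhds (h_val ▸ h_cont.tendsto)
    exact h_coeff.smul (hL.comp hh)

lemma hasDerivWithinAt_neg_one_of_eqOn_comp_hcomp (hα : 0 < α)
    (hf : Set.EqOn f (Λ ∘ hcomp α) (Set.Ioo (-1) 1))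
    (hΛ : ∀ᶠ τ in atBot, HasDerivAt Λ (Λ' τ) τ) (hlim : Tendsto Λ atBot (𝓝 (f (-1))))
    (hL : Tendsto (fun τ => Real.exp (-α * τ) • Λ' τ) atBot (𝓝 L)) :
    HasDerivWithinAt f ((2 * α)⁻¹ • L) (Set.Ici (-1)) (-1) := by
  have hf_neg : Set.EqOn (fun s => f (-s)) ((fun τ => Λ (-τ)) ∘ hcomp α) (Set.Ioo (-1) 1) := by
    intro s hs
    simpa only [Function.comp_apply, hcomp_neg] using hf (Set.neg_mem_Ioo_iff.2 (by simpa using hs))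
  have hΛ_neg : ∀ᶠ τ in atTop, HasDerivAt (fun τ => Λ (-τ)) (-Λ' (-τ)) τ := by
    filter_upwards [tendsto_neg_atTop_atBot.eventually hΛ] with τ hτ
    simpa [Function.comp_def] using hτ.scomp τ (hasDerivAt_neg τ)
  have hL_neg : Tendsto (fun τ => Real.exp (α * τ) • -Λ' (-τ)) atTop (𝓝 (-L)) := by
    simpa [Function.comp_def] using (hL.comp tendsto_neg_atTop_atBot).neg
  have h_one := hasDerivWithinAt_one_of_eqOn_comp_hcomp hα hf_neg hΛ_neg
    (hlim.comp tendsto_neg_atTop_atBot) hL_neg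
  simpa [Function.comp_def] using
    h_one.scomp_of_eq (-1) (hasDerivAt_neg (-1)).hasDerivWithinAt
      (fun s (hs : s ∈ Set.Ici (-1)) => neg_le.1 hs) (neg_neg 1).symm

end OneSidedDerivative

lemma tendsto_exp_mul_smul_zero_of_lt {ι E : Type*} [NormedAddCommGroup E] [NormedSpace ℝ E]
    {l : Filter ι} {u : ι → ℝ} {v : ι → E} {L : E} {α ρ : ℝ} (hu : Tendsto u l atTop)
    (hαρ : α < ρ) (hL : Tendsto (fun i => Real.exp (ρ * u i) • v i) l (𝓝 L)) :
    Tendsto (fun i => Real.exp (α * u i) • v i) l (𝓝 0) := by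
  have h_exp : Tendsto (fun i => Real.exp (-((ρ - α) * u i))) l (𝓝 0) :=
    Real.tendsto_exp_neg_atTop_nhds_zero.comp (hu.const_mul_atTop (sub_pos.2 hαρ))
  rw [← zero_smul ℝ L]
  refine (h_exp.smul hL).congr fun i => ?_
  rw [smul_smul, ← Real.exp_add]
  ring_nf

section ExpBiAsympConst

variable {d : ℕ} {Λ : ℝ → Fin d → ℝ} {α ρ : ℝ}

lemma ExpBiAsympConst.tendsto_atTop_zero (h : ExpBiAsympConst Λ ρ) (hαρ : α < ρ) :
    Tendsto (fun τ => Real.exp (α * τ) • deriv Λ τ) atTop (𝓝 0) :=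
  let ⟨_, hL⟩ := h.1
  tendsto_exp_mul_smul_zero_of_lt tendsto_id hαρ hL

lemma ExpBiAsympConst.tendsto_atBot_zero (h : ExpBiAsympConst Λ ρ) (hαρ : α < ρ) :
    Tendsto (fun τ => Real.exp (-α * τ) • deriv Λ τ) atBot (𝓝 0) := by
  obtain ⟨_, hL⟩ := h.2
  simp only [neg_mul_comm] at hL ⊢
  exact tendsto_exp_mul_smul_zero_of_lt tendsto_neg_atBot_atTop hαρ hL

end ExpBiAsympConst

section CompInput

variable {d : ℕ} (Λ : ℝ → Fin d → ℝ) (lp lm : Fin d → ℝ) (α : ℝ)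

lemma compInput_one : compInput Λ lp lm α 1 = lp := if_pos rfl

lemma compInput_neg_one : compInput Λ lp lm α (-1) = lm := by
  rw [compInput, if_neg (by norm_num), if_pos rfl]

lemma eqOn_compInput : Set.EqOn (compInput Λ lp lm α) (Λ ∘ hcomp α) (Set.Ioo (-1) 1) :=
  fun _ hs => (if_neg hs.2.ne).trans (if_neg hs.1.ne')

end CompInput

theorem stmt5_general {E : Type*} [NormedAddCommGroup E] [NormedSpace ℝ E]
    {Λ Λ' f : ℝ → E} {Lp Lm : E} {α : ℝ} (hα : 0 < α)
    (hf : Set.EqOn f (Λ ∘ hcomp α) (Set.Ioo (-1) 1))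
    (hΛp : ∀ᶠ τ in atTop, HasDerivAt Λ (Λ' τ) τ) (hΛm : ∀ᶠ τ in atBot, HasDerivAt Λ (Λ' τ) τ)
    (hp : Tendsto Λ atTop (𝓝 (f 1))) (hm : Tendsto Λ atBot (𝓝 (f (-1))))
    (hLp : Tendsto (fun τ => Real.exp (α * τ) • Λ' τ) atTop (𝓝 Lp))
    (hLm : Tendsto (fun τ => Real.exp (-α * τ) • Λ' τ) atBot (𝓝 Lm)) :
    HasDerivWithinAt f ((2 * α)⁻¹ • Lp) (Set.Icc (-1) 1) 1 ∧
      HasDerivWithinAt f ((2 * α)⁻¹ • Lm) (Set.Icc (-1) 1) (-1) :=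
  ⟨(hasDerivWithinAt_one_of_eqOn_comp_hcomp hα hf hΛp hp hLp).mono Set.Icc_subset_Iic_self,
    (hasDerivWithinAt_neg_one_of_eqOn_comp_hcomp hα hf hΛm hm hLm).mono Set.Icc_subset_Ici_self⟩

/-- If `Λ` is C¹ and exponentially bi-asymptotically constant with decay
coefficient `ρ > 0` and limits `lp`, `lm`, then for every `α` with `0 < α < ρ` the one-sided
derivatives of `Λ_α` within `[-1,1]` at the endpoints `s = 1` and `s = -1` exist and equal
`0`. -/
theorem stmt5 {d : ℕ} (Λ : ℝ → Fin d → ℝ) (ρ : ℝ) (hρ : 0 < ρ)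
    (hΛ : ContDiff ℝ 1 Λ) (hbac : ExpBiAsympConst Λ ρ)
    (lp lm : Fin d → ℝ)
    (hp : Tendsto Λ atTop (𝓝 lp)) (hm : Tendsto Λ atBot (𝓝 lm)) :
    ∀ α : ℝ, 0 < α → α < ρ →
      HasDerivWithinAt (compInput Λ lp lm α) 0 (Set.Icc (-1) 1) 1 ∧
      HasDerivWithinAt (compInput Λ lp lm α) 0 (Set.Icc (-1) 1) (-1) := by
  intro α hα hαρ
  have hd (τ : ℝ) : HasDerivAt Λ (deriv Λ τ) τ := (hΛ.differentiable one_ne_zero τ).hasDerivAt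
  simpa only [smul_zero] using stmt5_general hα (eqOn_compInput Λ lp lm α) (.of_forall hd)
    (.of_forall hd) (by rwa [compInput_one]) (by rwa [compInput_neg_one])
    (hbac.tendsto_atTop_zero hαρ) (hbac.tendsto_atBot_zero hαρ)
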